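/- arXiv:1712.00589 — 3 statements merged into one kernel-verified Lean document; each statement's English description precedes it below -/
import Mathlib

section
/- Let d ≥ 1, let ρ > 0, and let X ⊆ ℝ^d be a finite set. Then there exists a scaling factor c ∈ (0,1] such that the map x ↦ c·x is a combinatorial equivalence between Čech(X,ρ) and Čech(cX,ρ) (i.e., for every nonempty A ⊆ X, A is a simplex of Čech(X,ρ) if and only if cA = {c·x : x ∈ A} is a simplex of Čech(cX,ρ)), and moreover r_{cA} ≠ ρ/2 for every nonempty A ⊆ X. -/
open scoped Classical

/-- The radius of the minimal bounding sphere of a finite nonempty set. -/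
noncomputable def circumradius {d : ℕ} (A : Finset (EuclideanSpace ℝ (Fin d)))
    (hA : A.Nonempty) : ℝ :=
  ⨅ y : EuclideanSpace ℝ (Fin d), A.sup' hA fun x => ‖x - y‖

/-!
Scaling by `c > 0` multiplies every minimal bounding radius by `c`, and by compactness `A` spans a
simplex of `Čech(X, ρ)` exactly when its minimal bounding radius is at most `ρ / 2`. If `c < 1` is
close enough to `1`, radii at most `ρ / 2` become strictly smaller than `ρ / 2`, while each of the
finitely many radii exceeding `ρ / 2` still exceeds it.
-/

open Filter Topology

/-- The radius of the minimal bounding ball of a finite nonempty set `A` in a pseudometric space,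
with centres ranging over the whole space. On `ℝ^d` it is `circumradius`. -/
noncomputable def boundingRadius {M : Type*} [PseudoMetricSpace M] (A : Finset M)
    (hA : A.Nonempty) : ℝ :=
  ⨅ y : M, A.sup' hA fun x => dist x y

theorem circumradius_eq_boundingRadius {d : ℕ} (A : Finset (EuclideanSpace ℝ (Fin d)))
    (hA : A.Nonempty) : circumradius A hA = boundingRadius A hA := by
  simp only [circumradius, boundingRadius, dist_eq_norm]

section PseudoMetricSpace

variable {M : Type*} [PseudoMetricSpace M] {A : Finset M}

theorem boundingRadius_le_sup'_dist (hA : A.Nonempty) (y : M) :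
    boundingRadius A hA ≤ A.sup' hA fun x => dist x y := by
  have ⟨a, ha⟩ := hA
  refine ciInf_le ⟨0, ?_⟩ y
  rintro _ ⟨z, rfl⟩
  exact dist_nonneg.trans (Finset.le_sup' (fun x => dist x z) ha)

theorem exists_sup'_dist_eq_boundingRadius [ProperSpace M] (hA : A.Nonempty) :
    ∃ y : M, (A.sup' hA fun x => dist x y) = boundingRadius A hA := by
  have ⟨a, ha⟩ := hA
  have : Nonempty M := ⟨a⟩
  have continuous_sup : Continuous fun y : M => A.sup' hA fun x => dist x y :=
    Continuous.finset_sup'_apply hA fun x _ => by fun_prop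
  have tendsto_sup : Tendsto (fun y : M => A.sup' hA fun x => dist x y) (cocompact M) atTop :=
    tendsto_atTop_mono (fun y => Finset.le_sup' (fun x => dist x y) ha)
      (tendsto_dist_left_cocompact_atTop a)
  obtain ⟨y, hy⟩ := continuous_sup.exists_forall_le tendsto_sup
  exact ⟨y, (le_ciInf hy).antisymm (boundingRadius_le_sup'_dist hA y)⟩

theorem boundingRadius_le_iff [ProperSpace M] (hA : A.Nonempty) {t : ℝ} :
    boundingRadius A hA ≤ t ↔ ∃ y : M, ∀ x ∈ A, dist x y ≤ t := by
  constructor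
  · intro h
    obtain ⟨y, hy⟩ := exists_sup'_dist_eq_boundingRadius hA
    exact ⟨y, (Finset.sup'_le_iff hA _).1 (hy.trans_le h)⟩
  · rintro ⟨y, hy⟩
    exact (boundingRadius_le_sup'_dist hA y).trans (Finset.sup'_le hA _ hy)

end PseudoMetricSpace

theorem boundingRadius_image_smul {𝕜 E : Type*} [NormedDivisionRing 𝕜] [SeminormedAddCommGroup E]
    [Module 𝕜 E] [NormSMulClass 𝕜 E] [DecidableEq E] {c : 𝕜} (hc : c ≠ 0) {A : Finset E}
    (hA : A.Nonempty) :
    boundingRadius (A.image (c • ·)) (hA.image _) = ‖c‖ * boundingRadius A hA :=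
  calc ⨅ y : E, (A.image (c • ·)).sup' (hA.image _) (dist · y)
    _ = ⨅ y : E, A.sup' hA fun x => dist (c • x) y :=
      iInf_congr fun y => Finset.sup'_image (hA.image _) (dist · y)
    _ = ⨅ y : E, A.sup' hA fun x => dist (c • x) (c • y) :=
      ((MulAction.surjective₀ hc).iInf_comp fun y => A.sup' hA fun x => dist (c • x) y).symm
    _ = ⨅ y : E, ‖c‖ * A.sup' hA fun x => dist x y := by
      simp only [dist_smul₀, Finset.mul₀_sup' (norm_nonneg c)]
    _ = ‖c‖ * boundingRadius A hA := (Real.mul_iInf_of_nonneg (norm_nonneg c) _).symm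

theorem eventually_mul_le_iff_and_ne {𝕜 : Type*} [Field 𝕜] [LinearOrder 𝕜] [IsStrictOrderedRing 𝕜]
    [TopologicalSpace 𝕜] [OrderTopology 𝕜] {t : 𝕜} (ht : 0 < t) (r : 𝕜) :
    ∀ᶠ c in 𝓝[<] (1 : 𝕜), (r ≤ t ↔ c * r ≤ t) ∧ c * r ≠ t := by
  rcases le_or_gt r t with hrt | htr
  · filter_upwards [Ioo_mem_nhdsLT (zero_lt_one' 𝕜)] with c ⟨hc0, hc1⟩
    have hlt : c * r < t :=
      calc c * r ≤ c * t := mul_le_mul_of_nonneg_left hrt hc0.le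
        _ < t := mul_lt_of_lt_one_left ht hc1
    exact ⟨iff_of_true hrt hlt.le, hlt.ne⟩
  · have htendsto : Tendsto (· * r) (𝓝[<] (1 : 𝕜)) (𝓝 r) :=
      tendsto_nhdsWithin_of_tendsto_nhds <| by
        simpa only [one_mul, id] using (tendsto_id (x := 𝓝 (1 : 𝕜))).mul_const r
    filter_upwards [htendsto.eventually_const_lt htr] with c hlt
    exact ⟨iff_of_false htr.not_ge hlt.not_ge, hlt.ne'⟩

theorem exists_scaling_cech_equiv_no_critical_circumradius_general {E : Type*}
    [SeminormedAddCommGroup E] [NormedSpace ℝ E] [ProperSpace E] [DecidableEq E]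
    {ρ : ℝ} (hρ : 0 < ρ) (X : Finset E) :
    ∀ᶠ c : ℝ in 𝓝[<] 1, ∀ A ⊆ X, ∀ hA : A.Nonempty,
      ((∃ y : E, ∀ x ∈ A, ‖x - y‖ ≤ ρ / 2) ↔ (∃ y : E, ∀ x ∈ A, ‖c • x - y‖ ≤ ρ / 2)) ∧
        boundingRadius (A.image fun x => c • x) (hA.image _) ≠ ρ / 2 := by
  have hcrit : ∀ᶠ c : ℝ in 𝓝[<] 1, ∀ A ∈ X.powerset, ∀ hA : A.Nonempty,
      (boundingRadius A hA ≤ ρ / 2 ↔ c * boundingRadius A hA ≤ ρ / 2) ∧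
        c * boundingRadius A hA ≠ ρ / 2 := by
    simp only [eventually_all_finset, eventually_all]
    exact fun A _ hA => eventually_mul_le_iff_and_ne (half_pos hρ) (boundingRadius A hA)
  filter_upwards [hcrit, Ioo_mem_nhdsLT (zero_lt_one' ℝ)] with c hc ⟨hc0, _⟩ A hAX hA
  have hscale : c * boundingRadius A hA = boundingRadius (A.image (c • ·)) (hA.image _) := by
    rw [boundingRadius_image_smul hc0.ne', Real.norm_of_nonneg hc0.le]
  simpa only [hscale, boundingRadius_le_iff, Finset.forall_mem_image, dist_eq_norm]
    using hc A (Finset.mem_powerset.2 hAX) hA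

/-- Every finite set `X ⊆ ℝ^d` can be rescaled by a factor `c ∈ (0,1]` so that the
scaling map is a combinatorial equivalence of Čech complexes `Čech(X,ρ) ≃ Čech(cX,ρ)`
and no nonempty subset of the scaled set has minimal bounding radius exactly `ρ/2`. -/
theorem exists_scaling_cech_equiv_no_critical_circumradius
    (d : ℕ) (hd : 1 ≤ d) (ρ : ℝ) (hρ : 0 < ρ) (X : Finset (EuclideanSpace ℝ (Fin d))) :
    ∃ c : ℝ, c ∈ Set.Ioc (0 : ℝ) 1 ∧
      ∀ A : Finset (EuclideanSpace ℝ (Fin d)), A ⊆ X → ∀ hA : A.Nonempty,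
        (((∃ y : EuclideanSpace ℝ (Fin d), ∀ x ∈ A, ‖x - y‖ ≤ ρ / 2) ↔
          (∃ y' : EuclideanSpace ℝ (Fin d), ∀ x ∈ A, ‖c • x - y'‖ ≤ ρ / 2)) ∧
        circumradius (A.image fun x => c • x) (hA.image _) ≠ ρ / 2) := by
  simp only [circumradius_eq_boundingRadius]
  exact ((eventually_mem_set.2 (Ioc_mem_nhdsLT_of_mem ⟨zero_lt_one, le_rfl⟩)).and
    (exists_scaling_cech_equiv_no_critical_circumradius_general hρ X)).exists
end

section
/- Let d ≥ 1, let ρ > 0, and let X ⊆ ℝ^d be a finite set. Then there exist a finite set Y ⊆ ℝ^d, a bijection g : X → Y such that Čech(X,ρ) and Čech(Y,ρ) are combinatorially equivalent via g, and a δ > 0 such that for every finite set Z ⊆ ℝ^d and every bijection f : Y → Z with ‖f(y) − y‖ < δ for all y ∈ Y, the Čech complexes Čech(Y,ρ) and Čech(Z,ρ) are combinatorially equivalent via f. In other words, every finite simplicial complex admitting a d-dimensional Čech representation with respect to ρ admits a generic d-dimensional Čech representation with respect to ρ. -/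
open scoped Classical

/-- `A` is a simplex of the Čech complex with parameter `ρ` (of any point set
containing `A`). -/
def IsCechSimplex {d : ℕ} (ρ : ℝ) (A : Finset (EuclideanSpace ℝ (Fin d))) : Prop :=
  ∃ y : EuclideanSpace ℝ (Fin d), ∀ x ∈ A, ‖x - y‖ ≤ ρ / 2

/-!
Let `R(A)` be the smallest radius of a closed ball containing `A`; then `A` is a Čech simplex iff
`R(A) ≤ ρ / 2`, the infimum being attained by compactness. Since `R` changes by at most `δ` when
the points move by at most `δ`, a point set is generic as soon as no subset has `R` exactly equal
to `ρ / 2`. Finally `R(c • A) = c * R(A)`, so shrinking `X` by a factor `c < 1` close to `1` turns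
each equality `R(A) = ρ / 2` into a strict inequality and reverses no other comparison.
-/

open Filter Topology NNReal

section EnclosingRadius

variable {E : Type*} [PseudoMetricSpace E]

/-- The infimum of the radii of the closed balls, with arbitrary centre in `E`, that contain `A`.
It is the threshold at which `A` enters the Čech complexes: in proper spaces
`enclosingRadius A ≤ r` iff some ball of radius `r` contains `A`. -/
noncomputable def enclosingRadius (A : Finset E) : ℝ≥0 :=
  ⨅ y, A.sup (nndist · y)

lemma exists_sup_nndist_eq_enclosingRadius [Nonempty E] [ProperSpace E] (A : Finset E) :
    ∃ y, A.sup (nndist · y) = enclosingRadius A := by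
  suffices ∃ y, ∀ z, A.sup (nndist · y) ≤ A.sup (nndist · z) by
    obtain ⟨y, hy⟩ := this
    exact ⟨y, le_antisymm (le_ciInf hy) (ciInf_le' _ y)⟩
  obtain rfl | ⟨a, ha⟩ := A.eq_empty_or_nonempty
  · simp
  have hcont : Continuous fun y ↦ A.sup (nndist · y) :=
    Continuous.finset_sup_apply fun x _ ↦ continuous_const.nndist continuous_id
  have hcoercive : Tendsto (fun y ↦ A.sup (nndist · y)) (cocompact E) atTop :=
    tendsto_atTop_mono (fun y ↦ Finset.le_sup (f := (nndist · y)) ha)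
      (NNReal.tendsto_coe_atTop.1 (tendsto_dist_left_cocompact_atTop a))
  exact hcont.exists_forall_le hcoercive

lemma enclosingRadius_le_iff [Nonempty E] [ProperSpace E] {A : Finset E} {r : ℝ} (hr : 0 ≤ r) :
    enclosingRadius A ≤ r ↔ ∃ y, ∀ x ∈ A, dist x y ≤ r := by
  lift r to ℝ≥0 using hr
  simp only [dist_nndist, NNReal.coe_le_coe, ← Finset.sup_le_iff]
  constructor
  · obtain ⟨y, hy⟩ := exists_sup_nndist_eq_enclosingRadius A
    exact fun h ↦ ⟨y, hy.trans_le h⟩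
  · rintro ⟨y, hy⟩
    exact (ciInf_le' _ y).trans hy

lemma enclosingRadius_image_le_add [Nonempty E] [DecidableEq E] {ι : Type*} {s : Finset ι}
    {f g : ι → E} {δ : ℝ≥0} (hfg : ∀ i ∈ s, nndist (f i) (g i) ≤ δ) :
    enclosingRadius (s.image f) ≤ enclosingRadius (s.image g) + δ := by
  rw [← tsub_le_iff_right]
  refine le_ciInf fun y ↦ tsub_le_iff_right.2 ((ciInf_le' _ y).trans ?_)
  simp only [Finset.sup_image]
  refine Finset.sup_le fun i hi ↦ ?_
  calc nndist (f i) y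
    _ ≤ nndist (f i) (g i) + nndist (g i) y := nndist_triangle ..
    _ ≤ δ + s.sup ((nndist · y) ∘ g) :=
      add_le_add (hfg i hi) (Finset.le_sup (f := (nndist · y) ∘ g) hi)
    _ = s.sup ((nndist · y) ∘ g) + δ := add_comm ..

lemma abs_enclosingRadius_image_sub_le [Nonempty E] [DecidableEq E] {A : Finset E} {f : E → E}
    {δ : ℝ} (hδ : 0 ≤ δ) (hf : ∀ x ∈ A, dist (f x) x ≤ δ) :
    |(enclosingRadius (A.image f) : ℝ) - enclosingRadius A| ≤ δ := by
  lift δ to ℝ≥0 using hδ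
  have hle := enclosingRadius_image_le_add (g := id) hf
  have hge := enclosingRadius_image_le_add (f := id) fun x hx ↦ (nndist_comm ..).trans_le (hf x hx)
  rw [Finset.image_id] at hle hge
  exact abs_sub_le_iff.2 ⟨sub_le_iff_le_add'.2 hle, sub_le_iff_le_add'.2 hge⟩

lemma exists_pos_forall_enclosingRadius_image_le_iff [Nonempty E] [DecidableEq E] {r : ℝ}
    {Y : Finset E} (hY : ∀ B ⊆ Y, (enclosingRadius B : ℝ) ≠ r) :
    ∃ δ > 0, ∀ f : E → E, (∀ y ∈ Y, dist (f y) y < δ) →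
      ∀ B ⊆ Y, (enclosingRadius B ≤ r ↔ enclosingRadius (B.image f) ≤ r) := by
  have hsmall : ∀ᶠ δ in 𝓝[>] (0 : ℝ), ∀ B ∈ Y.powerset, δ < |(enclosingRadius B : ℝ) - r| :=
    (eventually_all_finset _).2 fun B hB ↦ nhdsWithin_le_nhds <|
      eventually_lt_nhds <| abs_pos.2 <| sub_ne_zero.2 <| hY B <| Finset.mem_powerset.1 hB
  obtain ⟨δ, hδY, hδ : 0 < δ⟩ := (hsmall.and self_mem_nhdsWithin).exists
  refine ⟨δ, hδ, fun f hf B hB ↦ ?_⟩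
  have hclose := abs_enclosingRadius_image_sub_le hδ.le fun x hx ↦ (hf x (hB hx)).le
  have hfar := hδY B (Finset.mem_powerset.2 hB)
  grind

end EnclosingRadius

section Scaling

lemma enclosingRadius_image_smul {𝕜 E : Type*} [NormedDivisionRing 𝕜] [SeminormedAddCommGroup E]
    [Module 𝕜 E] [NormSMulClass 𝕜 E] [DecidableEq E] {c : 𝕜} (hc : c ≠ 0) (A : Finset E) :
    enclosingRadius (A.image (c • ·)) = ‖c‖₊ * enclosingRadius A := by
  have hsup (y : E) : (A.image (c • ·)).sup (nndist · (c • y)) = ‖c‖₊ * A.sup (nndist · y) := by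
    simp only [Finset.sup_image, NNReal.mul_finset_sup, Function.comp_def, nndist_smul₀]
  simp only [enclosingRadius, NNReal.mul_iInf, ← hsup]
  exact ((MulAction.surjective₀ hc).iInf_comp _).symm

lemma eventually_mul_le_iff_and_mul_ne {r : ℝ} (hr : 0 < r) (t : ℝ) :
    ∀ᶠ c in 𝓝[<] (1 : ℝ), (t ≤ r ↔ c * t ≤ r) ∧ c * t ≠ r := by
  have hcont : Tendsto (fun c : ℝ ↦ c * t) (𝓝[<] 1) (𝓝 t) :=
    ((continuous_mul_const t).tendsto' 1 t (one_mul t)).mono_left nhdsWithin_le_nhds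
  obtain hlt | rfl | hgt := lt_trichotomy t r
  · filter_upwards [hcont.eventually_lt_const hlt] with c hc
    exact ⟨iff_of_true hlt.le hc.le, hc.ne⟩
  · filter_upwards [self_mem_nhdsWithin] with c hc
    have hct : c * t < t := mul_lt_of_lt_one_left hr hc
    exact ⟨iff_of_true le_rfl hct.le, hct.ne⟩
  · filter_upwards [hcont.eventually_const_lt hgt] with c hc
    exact ⟨iff_of_false hgt.not_ge hc.not_ge, hc.ne'⟩

variable {E : Type*} [SeminormedAddCommGroup E] [NormedSpace ℝ E] [DecidableEq E]

lemma exists_smul_enclosingRadius_le_iff_and_ne {r : ℝ} (hr : 0 < r) (X : Finset E) :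
    ∃ c : ℝ, c ≠ 0 ∧ ∀ A ⊆ X,
      (enclosingRadius A ≤ r ↔ enclosingRadius (A.image (c • ·)) ≤ r) ∧
        (enclosingRadius (A.image (c • ·)) : ℝ) ≠ r := by
  have hscale := (eventually_all_finset X.powerset).2 fun A _ ↦
    eventually_mul_le_iff_and_mul_ne hr (enclosingRadius A)
  have hpos : ∀ᶠ c in 𝓝[<] (1 : ℝ), 0 < c := nhdsWithin_le_nhds (lt_mem_nhds one_pos)
  obtain ⟨c, hcX, hc⟩ := (hscale.and hpos).exists
  refine ⟨c, hc.ne', fun A hA ↦ ?_⟩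
  rw [enclosingRadius_image_smul hc.ne', NNReal.coe_mul, coe_nnnorm, Real.norm_of_nonneg hc.le]
  exact hcX A (Finset.mem_powerset.2 hA)

theorem exists_generic_cech_representation_general [ProperSpace E] {ρ : ℝ} (hρ : 0 < ρ)
    (X : Finset E) :
    ∃ (Y : Finset E) (g : E → E), Set.BijOn g X Y ∧
      (∀ A ⊆ X,
        ((∃ y, ∀ x ∈ A, ‖x - y‖ ≤ ρ / 2) ↔ ∃ y, ∀ x ∈ A.image g, ‖x - y‖ ≤ ρ / 2)) ∧
      ∃ δ > 0, ∀ f : E → E, (∀ y ∈ Y, ‖f y - y‖ < δ) → ∀ B ⊆ Y,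
        ((∃ y, ∀ x ∈ B, ‖x - y‖ ≤ ρ / 2) ↔ ∃ y, ∀ x ∈ B.image f, ‖x - y‖ ≤ ρ / 2) := by
  simp only [← dist_eq_norm, ← enclosingRadius_le_iff (half_pos hρ).le]
  obtain ⟨c, hc, hcX⟩ := exists_smul_enclosingRadius_le_iff_and_ne (half_pos hρ) X
  have hbij : Set.BijOn (c • ·) (X : Set E) (X.image (c • ·) : Finset E) := by
    rw [Finset.coe_image]
    exact (MulAction.injective₀ hc).injOn.bijOn_image
  refine ⟨X.image (c • ·), (c • ·), hbij, fun A hA ↦ (hcX A hA).1,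
    exists_pos_forall_enclosingRadius_image_le_iff fun B hB ↦ ?_⟩
  obtain ⟨A, hA, rfl⟩ := Finset.subset_image_iff.1 hB
  exact (hcX A hA).2

end Scaling

/-- Every finite simplicial complex admitting a `d`-dimensional Čech representation
with respect to `ρ` admits a generic one: there are a point set `Y`, a bijection
`g : X → Y` realizing a combinatorial equivalence `Čech(X,ρ) ≃ Čech(Y,ρ)`, and a
`δ > 0` such that moving each point of `Y` by less than `δ` yields a Čech complex
combinatorially equivalent to `Čech(Y,ρ)`. -/
theorem exists_generic_cech_representation
    (d : ℕ) (hd : 1 ≤ d) (ρ : ℝ) (hρ : 0 < ρ) (X : Finset (EuclideanSpace ℝ (Fin d))) :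
    ∃ Y : Finset (EuclideanSpace ℝ (Fin d)),
      ∃ g : EuclideanSpace ℝ (Fin d) → EuclideanSpace ℝ (Fin d),
        Set.BijOn g ↑X ↑Y ∧
        (∀ A : Finset (EuclideanSpace ℝ (Fin d)), A ⊆ X → A.Nonempty →
          (IsCechSimplex ρ A ↔ IsCechSimplex ρ (A.image g))) ∧
        ∃ δ > (0 : ℝ), ∀ Z : Finset (EuclideanSpace ℝ (Fin d)),
          ∀ f : EuclideanSpace ℝ (Fin d) → EuclideanSpace ℝ (Fin d),
            Set.BijOn f ↑Y ↑Z → (∀ y ∈ Y, ‖f y - y‖ < δ) →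
            ∀ B : Finset (EuclideanSpace ℝ (Fin d)), B ⊆ Y → B.Nonempty →
              (IsCechSimplex ρ B ↔ IsCechSimplex ρ (B.image f)) := by
  obtain ⟨Y, g, hg, hX, δ, hδ, hY⟩ := exists_generic_cech_representation_general hρ X
  exact ⟨Y, g, hg, fun A hA _ ↦ hX A hA, δ, hδ, fun _ f _ hf B hB _ ↦ hY f hf B hB⟩
end

section
/- Let (Ω, 𝔉, ℙ) be a probability space, let c ∈ (0,1], and let E_1, E_2, … be measurable events such that ℙ(E_i) ≥ c for all i ≥ 1 and |ℙ(E_i ∩ E_j) − ℙ(E_i)·ℙ(E_j)| ≤ 1/i² for all i, j with j > i ≥ 1. Then ℙ(limsup_{i→∞} E_i) = 1, i.e. almost surely infinitely many of the events E_i occur. -/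
open MeasureTheory Filter

/-!
Let `S n` count the events among the first `n` that occur. Its mean is at least `c * n`, and its
variance is `o(n ^ 2)`: the diagonal contributes `O(n)`, and as the covariances of `E i` with later
events are at most some `a i → 0`, Cesàro's theorem makes the off-diagonal sum `o(n ^ 2)`.
Chebyshev's inequality then gives `μ {S n ≤ 𝔼[S n] / 2} → 0`. As `S n` increases with `n` and
`𝔼[S n] → ∞`, this forces `S n → ∞` almost surely.
-/

open ProbabilityTheory
open scoped Topology

section BorelCantelli

variable {Ω : Type*} [MeasurableSpace Ω] {μ : Measure Ω}

section SecondMoment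

variable [IsFiniteMeasure μ]

theorem measure_le_half_integral_le {X : Ω → ℝ} (hX : MemLp X 2 μ) (hmean : 0 < μ[X]) :
    μ {ω | X ω ≤ μ[X] / 2} ≤ ENNReal.ofReal (4 * (Var[X; μ] / μ[X] ^ 2)) := by
  have hsubset : {ω | X ω ≤ μ[X] / 2} ⊆ {ω | μ[X] / 2 ≤ |X ω - μ[X]|} := by
    intro ω (hω : X ω ≤ μ[X] / 2)
    rw [Set.mem_ofPred_eq, le_abs]
    right
    linarith
  calc μ {ω | X ω ≤ μ[X] / 2}
      ≤ μ {ω | μ[X] / 2 ≤ |X ω - μ[X]|} := measure_mono hsubset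
    _ ≤ ENNReal.ofReal (Var[X; μ] / (μ[X] / 2) ^ 2) :=
        meas_ge_le_variance_div_sq hX (half_pos hmean)
    _ = ENNReal.ofReal (4 * (Var[X; μ] / μ[X] ^ 2)) := by
        congr 1
        field_simp
        norm_num

variable {ι : Type*} [Preorder ι] [IsDirectedOrder ι] [Nonempty ι] {S : ι → Ω → ℝ}

theorem measure_forall_le_eq_zero_of_tendsto_variance_div_sq (hS : ∀ n, MemLp (S n) 2 μ)
    (hmean : Tendsto (fun n ↦ μ[S n]) atTop atTop)
    (hvar : Tendsto (fun n ↦ Var[S n; μ] / μ[S n] ^ 2) atTop (𝓝 0)) (M : ℝ) :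
    μ {ω | ∀ n, S n ω ≤ M} = 0 := by
  have hbound : ∀ᶠ n in atTop,
      μ {ω | ∀ n, S n ω ≤ M} ≤ ENNReal.ofReal (4 * (Var[S n; μ] / μ[S n] ^ 2)) := by
    filter_upwards [hmean.eventually_gt_atTop 0, hmean.eventually_ge_atTop (2 * M)] with n hpos hM
    have hsubset : {ω | ∀ n, S n ω ≤ M} ⊆ {ω | S n ω ≤ μ[S n] / 2} := fun ω hω ↦
      (hω n).trans (by linarith)
    exact (measure_mono hsubset).trans (measure_le_half_integral_le (hS n) hpos)
  have hlim : Tendsto (fun n ↦ ENNReal.ofReal (4 * (Var[S n; μ] / μ[S n] ^ 2))) atTop (𝓝 0) := by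
    simpa using ENNReal.tendsto_ofReal (hvar.const_mul 4)
  exact nonpos_iff_eq_zero.1 (ge_of_tendsto hlim hbound)

theorem ae_tendsto_atTop_of_tendsto_variance_div_sq (hS : ∀ n, MemLp (S n) 2 μ)
    (hmono : ∀ᵐ ω ∂μ, Monotone fun n ↦ S n ω)
    (hmean : Tendsto (fun n ↦ μ[S n]) atTop atTop)
    (hvar : Tendsto (fun n ↦ Var[S n; μ] / μ[S n] ^ 2) atTop (𝓝 0)) :
    ∀ᵐ ω ∂μ, Tendsto (fun n ↦ S n ω) atTop atTop := by
  have hunbounded : ∀ᵐ ω ∂μ, ∀ M : ℕ, ¬ ∀ n, S n ω ≤ M := ae_all_iff.2 fun M ↦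
    measure_eq_zero_iff_ae_notMem.1
      (measure_forall_le_eq_zero_of_tendsto_variance_div_sq hS hmean hvar M)
  filter_upwards [hmono, hunbounded] with ω hω hω'
  refine tendsto_atTop_atTop_of_monotone hω fun b ↦ ?_
  obtain ⟨M, hM⟩ := exists_nat_ge b
  obtain ⟨n, hn⟩ := not_forall.1 (hω' M)
  exact ⟨n, hM.trans (not_le.1 hn).le⟩

end SecondMoment

section PartialSums

variable {X : ℕ → Ω → ℝ} {a : ℕ → ℝ} {v c : ℝ}

theorem mul_le_integral_sum_range (hX : ∀ i, Integrable (X i) μ) (hmean : ∀ i, c ≤ μ[X i])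
    (n : ℕ) : c * n ≤ μ[∑ i ∈ Finset.range n, X i] := by
  simp only [Finset.sum_apply]
  rw [integral_finsetSum _ fun i _ ↦ hX i]
  simpa [mul_comm] using
    Finset.card_nsmul_le_sum (Finset.range n) (fun i ↦ μ[X i]) c fun i _ ↦ hmean i

variable [IsFiniteMeasure μ]

theorem variance_sum_range_le (hX : ∀ i, MemLp (X i) 2 μ) (hvar : ∀ i, Var[X i; μ] ≤ v)
    (hcov : ∀ i j, i < j → cov[X i, X j; μ] ≤ a i) (n : ℕ) :
    Var[∑ i ∈ Finset.range n, X i; μ] ≤ n * (v + 2 * ∑ i ∈ Finset.range n, |a i|) := by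
  induction n with
  | zero => simp
  | succ n ih =>
    have hcov_sum : cov[∑ i ∈ Finset.range n, X i, X n; μ] ≤ ∑ i ∈ Finset.range n, |a i| := by
      rw [covariance_sum_left' (fun i _ ↦ hX i) (hX n)]
      exact Finset.sum_le_sum fun i hi ↦
        (hcov i n (Finset.mem_range.1 hi)).trans (le_abs_self _)
    have hlast : 0 ≤ (n + 1) * |a n| := by positivity
    rw [Finset.sum_range_succ, variance_add (memLp_finsetSum' _ fun i _ ↦ hX i) (hX n),
      Finset.sum_range_succ]
    push_cast
    linarith [hvar n]

theorem tendsto_variance_sum_range_div_sq (hX : ∀ i, MemLp (X i) 2 μ)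
    (hvar : ∀ i, Var[X i; μ] ≤ v) (hcov : ∀ i j, i < j → cov[X i, X j; μ] ≤ a i)
    (ha : Tendsto a atTop (𝓝 0)) :
    Tendsto (fun n : ℕ ↦ Var[∑ i ∈ Finset.range n, X i; μ] / (n : ℝ) ^ 2) atTop (𝓝 0) := by
  have hcesaro : Tendsto (fun n : ℕ ↦ (n : ℝ)⁻¹ * ∑ i ∈ Finset.range n, |a i|) atTop (𝓝 0) := by
    simpa using ha.abs.cesaro
  have hbound_lim : Tendsto
      (fun n : ℕ ↦ v / n + 2 * ((n : ℝ)⁻¹ * ∑ i ∈ Finset.range n, |a i|)) atTop (𝓝 0) := by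
    simpa using (tendsto_const_div_atTop_nhds_zero_nat v).add (hcesaro.const_mul 2)
  refine squeeze_zero' (.of_forall fun n ↦ div_nonneg (variance_nonneg _ _) (sq_nonneg _)) ?_
    hbound_lim
  filter_upwards [eventually_gt_atTop 0] with n hn
  have : (0 : ℝ) < n := Nat.cast_pos.2 hn
  calc Var[∑ i ∈ Finset.range n, X i; μ] / (n : ℝ) ^ 2
      ≤ n * (v + 2 * ∑ i ∈ Finset.range n, |a i|) / (n : ℝ) ^ 2 := by
        gcongr
        exact variance_sum_range_le hX hvar hcov n
    _ = v / n + 2 * ((n : ℝ)⁻¹ * ∑ i ∈ Finset.range n, |a i|) := by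
        field_simp

theorem ae_tendsto_sum_range_atTop_of_covariance_le (hX : ∀ i, MemLp (X i) 2 μ)
    (hnonneg : ∀ i, 0 ≤ᵐ[μ] X i) (hc : 0 < c) (hmean : ∀ i, c ≤ μ[X i])
    (hvar : ∀ i, Var[X i; μ] ≤ v) (hcov : ∀ i j, i < j → cov[X i, X j; μ] ≤ a i)
    (ha : Tendsto a atTop (𝓝 0)) :
    ∀ᵐ ω ∂μ, Tendsto (fun n ↦ ∑ i ∈ Finset.range n, X i ω) atTop atTop := by
  have hmono : ∀ᵐ ω ∂μ, Monotone fun n ↦ (∑ i ∈ Finset.range n, X i) ω := by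
    filter_upwards [ae_all_iff.2 hnonneg] with ω hω
    simp only [Finset.sum_apply]
    exact (Finset.sum_mono_set_of_nonneg hω).comp Finset.range_mono
  have hmean_sum := mul_le_integral_sum_range (fun i ↦ (hX i).integrable one_le_two) hmean
  have hmean_lim : Tendsto (fun n ↦ μ[∑ i ∈ Finset.range n, X i]) atTop atTop :=
    tendsto_atTop_mono hmean_sum (tendsto_natCast_atTop_atTop.const_mul_atTop hc)
  have hvar_lim : Tendsto (fun n ↦ Var[∑ i ∈ Finset.range n, X i; μ] /
      μ[∑ i ∈ Finset.range n, X i] ^ 2) atTop (𝓝 0) := by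
    refine squeeze_zero' (.of_forall fun n ↦ div_nonneg (variance_nonneg _ _) (sq_nonneg _)) ?_
      (by simpa using (tendsto_variance_sum_range_div_sq hX hvar hcov ha).div_const (c ^ 2))
    filter_upwards [eventually_gt_atTop 0] with n hn
    have : (0 : ℝ) < n := Nat.cast_pos.2 hn
    rw [div_div, ← mul_pow, mul_comm (n : ℝ)]
    exact div_le_div_of_nonneg_left (variance_nonneg _ _) (by positivity)
      (by gcongr; exact hmean_sum n)
  simpa only [Finset.sum_apply] using
    ae_tendsto_atTop_of_tendsto_variance_div_sq
      (fun n ↦ memLp_finsetSum' (Finset.range n) fun i _ ↦ hX i) hmono hmean_lim hvar_lim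

end PartialSums

section Events

theorem memLp_indicator_one [IsFiniteMeasure μ] {A : Set Ω} (hA : MeasurableSet A)
    (p : ENNReal) : MemLp (A.indicator (1 : Ω → ℝ)) p μ :=
  memLp_indicator_const p hA 1 (Or.inr (measure_ne_top μ A))

variable [IsProbabilityMeasure μ]

theorem covariance_indicator_one {A B : Set Ω} (hA : MeasurableSet A) (hB : MeasurableSet B) :
    cov[A.indicator (1 : Ω → ℝ), B.indicator 1; μ] = μ.real (A ∩ B) - μ.real A * μ.real B := by
  rw [covariance_eq_sub (memLp_indicator_one hA 2) (memLp_indicator_one hB 2),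
    ← Set.inter_indicator_one, integral_indicator_one (hA.inter hB), integral_indicator_one hA,
    integral_indicator_one hB]

theorem variance_indicator_one_le {A : Set Ω} (hA : MeasurableSet A) :
    Var[A.indicator (1 : Ω → ℝ); μ] ≤ 1 / 4 := by
  have hmem : ∀ ω, A.indicator (1 : Ω → ℝ) ω ∈ Set.Icc 0 1 := fun ω ↦
    ⟨Set.indicator_nonneg (fun _ _ ↦ zero_le_one) ω,
      Set.indicator_le_self' (fun _ _ ↦ zero_le_one) ω⟩
  calc Var[A.indicator (1 : Ω → ℝ); μ]
      ≤ ((1 - 0) / 2) ^ 2 := variance_le_sq_of_bounded (.of_forall hmem)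
        (measurable_one.indicator hA).aemeasurable
    _ = 1 / 4 := by norm_num

theorem limsup_eq_one_of_unif_lower_bound_and_cov_decay_general {E : ℕ → Set Ω} {a : ℕ → ℝ}
    {c : ℝ} (hc : 0 < c) (hE : ∀ i, MeasurableSet (E i)) (hlow : ∀ i, c ≤ μ.real (E i))
    (hcov : ∀ i j, i < j → μ.real (E i ∩ E j) - μ.real (E i) * μ.real (E j) ≤ a i)
    (ha : Tendsto a atTop (𝓝 0)) :
    μ (limsup E atTop) = 1 := by
  have hcount : ∀ᵐ ω ∂μ, Tendsto
      (fun n ↦ ∑ i ∈ Finset.range n, (E i).indicator (1 : Ω → ℝ) ω) atTop atTop :=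
    ae_tendsto_sum_range_atTop_of_covariance_le (fun i ↦ memLp_indicator_one (hE i) 2)
      (fun i ↦ .of_forall (Set.indicator_nonneg fun _ _ ↦ zero_le_one)) hc
      (fun i ↦ (hlow i).trans_eq (integral_indicator_one (hE i)).symm)
      (fun i ↦ variance_indicator_one_le (hE i))
      (fun i j hij ↦ (covariance_indicator_one (hE i) (hE j)).trans_le (hcov i j hij)) ha
  rw [← mem_ae_iff_prob_eq_one (MeasurableSet.measurableSet_limsup hE),
    Set.limsup_eq_tendsto_sum_indicator_atTop (zero_lt_one (α := ℝ)) E]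
  exact hcount

end Events

end BorelCantelli

/-- If the events `E i` (for `i ≥ 1`) all have probability at least `c > 0` and the
covariances decay like `1/i²`, then almost surely infinitely many of the events
occur. -/
theorem limsup_eq_one_of_unif_lower_bound_and_cov_decay {Ω : Type*} [MeasurableSpace Ω]
    (μ : Measure Ω) [IsProbabilityMeasure μ]
    (c : ℝ) (hc : c ∈ Set.Ioc (0 : ℝ) 1)
    (E : ℕ → Set Ω) (hE : ∀ i, MeasurableSet (E i))
    (hlow : ∀ i, 1 ≤ i → c ≤ (μ (E i)).toReal)
    (hcov : ∀ i j : ℕ, 1 ≤ i → i < j →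
      |(μ (E i ∩ E j)).toReal - (μ (E i)).toReal * (μ (E j)).toReal| ≤ 1 / (i : ℝ) ^ 2) :
    μ (Filter.limsup E Filter.atTop) = 1 := by
  rw [← limsup_nat_add E 1]
  exact limsup_eq_one_of_unif_lower_bound_and_cov_decay_general hc.1 (fun i ↦ hE (i + 1))
    (fun i ↦ hlow (i + 1) (by omega))
    (fun i j hij ↦ (le_abs_self _).trans (hcov (i + 1) (j + 1) (by omega) (by omega)))
    ((tendsto_add_atTop_iff_nat 1).2 (tendsto_const_div_pow 1 2 two_ne_zero))
end
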